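/- Let (A, B, χ, c, δ) and (U, V, χ_U, c_U, δ_V) be 3-periodic exact sequences of abelian groups, and let μ_A : A → U and μ_B : B → V be group homomorphisms making the diagram commute, i.e. μ_A ∘ χ = χ_U ∘ μ_A, μ_B ∘ c = c_U ∘ μ_A, and μ_A ∘ δ = δ_V ∘ μ_B. Assume that χ and χ_U are nilpotent, i.e. there exists N ∈ ℕ such that the N-fold composites χ^N = 0 and χ_U^N = 0. Then μ_B is a group isomorphism if and only if μ_A is a group isomorphism. -/

import Mathlib

/-!
If `μ_B` is bijective, the strong four lemma applied to `B → A → A → B` gives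
`ker μ_A = χ (ker μ_A)` and `im μ_A = χ_U⁻¹ (im μ_A)`. Iterating, `ker μ_A` lies in the image of
every power of `χ`, and an element of `U` lies in `im μ_A` as soon as some power of `χ_U` kills it.
The converse is the five lemma for `A → A → B → A → A`.
-/

section StrongFourLemma

variable {M₁ M₂ M₃ M₄ N₁ N₂ N₃ N₄ : Type*}
  [AddGroup M₁] [AddGroup M₂] [AddGroup M₃] [AddGroup M₄]
  [AddGroup N₁] [AddGroup N₂] [AddGroup N₃] [AddGroup N₄]
  {f₁ : M₁ →+ M₂} {f₂ : M₂ →+ M₃} {f₃ : M₃ →+ M₄}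
  {g₁ : N₁ →+ N₂} {g₂ : N₂ →+ N₃} {g₃ : N₃ →+ N₄}
  {i₁ : M₁ →+ N₁} {i₂ : M₂ →+ N₂} {i₃ : M₃ →+ N₃} {i₄ : M₄ →+ N₄}

theorem map_ker_eq_ker_of_surjective_of_injective
    (hf₁₂ : Function.Exact f₁ f₂) (hf₂₃ : Function.Exact f₂ f₃) (hg₁₂ : Function.Exact g₁ g₂)
    (hc₁ : g₁.comp i₁ = i₂.comp f₁) (hc₂ : g₂.comp i₂ = i₃.comp f₂)
    (hc₃ : g₃.comp i₃ = i₄.comp f₃)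
    (hi₁ : Function.Surjective i₁) (hi₄ : Function.Injective i₄) :
    i₂.ker.map f₂ = i₃.ker := by
  apply le_antisymm
  · rintro _ ⟨x, hx : i₂ x = 0, rfl⟩
    calc i₃ (f₂ x) = g₂ (i₂ x) := (DFunLike.congr_fun hc₂ x).symm
      _ = 0 := by rw [hx, map_zero]
  · intro y (hy : i₃ y = 0)
    have hf₃y : f₃ y = 0 := (injective_iff_map_eq_zero i₄).mp hi₄ _ <|
      calc i₄ (f₃ y) = g₃ (i₃ y) := (DFunLike.congr_fun hc₃ y).symm
        _ = 0 := by rw [hy, map_zero]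
    obtain ⟨x, rfl⟩ := (hf₂₃ y).mp hf₃y
    obtain ⟨n, hn⟩ := (hg₁₂ (i₂ x)).mp ((DFunLike.congr_fun hc₂ x).trans hy)
    obtain ⟨m, rfl⟩ := hi₁ n
    have hm : i₂ (f₁ m) = i₂ x := (DFunLike.congr_fun hc₁ m).symm.trans hn
    refine ⟨x - f₁ m, ?_, ?_⟩
    · change i₂ (x - f₁ m) = 0
      rw [map_sub, hm, sub_self]
    · rw [map_sub, hf₁₂.apply_apply_eq_zero, sub_zero]

theorem comap_range_eq_range_of_surjective_of_injective
    (hf₂₃ : Function.Exact f₂ f₃) (hg₁₂ : Function.Exact g₁ g₂) (hg₂₃ : Function.Exact g₂ g₃)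
    (hc₁ : g₁.comp i₁ = i₂.comp f₁) (hc₂ : g₂.comp i₂ = i₃.comp f₂)
    (hc₃ : g₃.comp i₃ = i₄.comp f₃)
    (hi₁ : Function.Surjective i₁) (hi₄ : Function.Injective i₄) :
    i₃.range.comap g₂ = i₂.range := by
  apply le_antisymm
  · rintro n ⟨y, hy : i₃ y = g₂ n⟩
    have hf₃y : f₃ y = 0 := (injective_iff_map_eq_zero i₄).mp hi₄ _ <|
      calc i₄ (f₃ y) = g₃ (i₃ y) := (DFunLike.congr_fun hc₃ y).symm
        _ = 0 := by rw [hy, hg₂₃.apply_apply_eq_zero]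
    obtain ⟨x, rfl⟩ := (hf₂₃ y).mp hf₃y
    have hx : g₂ (i₂ x) = g₂ n := (DFunLike.congr_fun hc₂ x).trans hy
    obtain ⟨k, hk⟩ := (hg₁₂ (n - i₂ x)).mp (by rw [map_sub, hx, sub_self])
    obtain ⟨m, rfl⟩ := hi₁ k
    have hm : i₂ (f₁ m) = n - i₂ x := (DFunLike.congr_fun hc₁ m).symm.trans hk
    exact ⟨f₁ m + x, by rw [map_add, hm, sub_add_cancel]⟩
  · rintro _ ⟨x, rfl⟩
    exact ⟨f₂ x, (DFunLike.congr_fun hc₂ x).symm⟩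

end StrongFourLemma

theorem eq_bot_of_le_map {G : Type*} [AddGroup G] {f : G →+ G} {H : AddSubgroup G}
    (hH : H ≤ H.map f) (hf : ∀ x, (∀ n, x ∈ Set.range (⇑f)^[n]) → x = 0) : H = ⊥ := by
  have hsurj : Set.SurjOn f H H := hH
  exact H.eq_bot_iff_forall.mpr fun x hx ↦
    hf x fun n ↦ Set.image_subset_range _ _ (hsurj.iterate n hx)

theorem eq_top_of_comap_le {G : Type*} [AddGroup G] {f : G →+ G} {H : AddSubgroup G}
    (hH : H.comap f ≤ H) (hf : ∀ x, ∃ n, (⇑f)^[n] x = 0) : H = ⊤ := by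
  have hcompl : Set.MapsTo f (H : Set G)ᶜ (H : Set G)ᶜ := fun _ hx hfx ↦ hx (hH hfx)
  refine H.eq_top_iff'.mpr fun x ↦ by_contra fun hx ↦ ?_
  obtain ⟨n, hn⟩ := hf x
  exact hcompl.iterate n hx (hn ▸ H.zero_mem)

theorem muB_iso_iff_muA_iso_general
    {A B U V : Type*} [AddGroup A] [AddGroup B] [AddGroup U] [AddGroup V]
    {χ : A →+ A} {c : A →+ B} {δ : B →+ A} {χU : U →+ U} {cU : U →+ V} {δV : V →+ U}
    (hχc : Function.Exact χ c) (hcδ : Function.Exact c δ) (hδχ : Function.Exact δ χ)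
    (hχcU : Function.Exact χU cU) (hcδV : Function.Exact cU δV) (hδχU : Function.Exact δV χU)
    {μA : A →+ U} {μB : B →+ V}
    (hμχ : χU.comp μA = μA.comp χ) (hμc : cU.comp μA = μB.comp c) (hμδ : δV.comp μB = μA.comp δ)
    (hχ : ∀ a, (∀ n, a ∈ Set.range (⇑χ)^[n]) → a = 0) (hχU : ∀ u, ∃ n, (⇑χU)^[n] u = 0) :
    Function.Bijective μB ↔ Function.Bijective μA := by
  constructor
  · rintro ⟨hinj, hsurj⟩
    have hker : μA.ker.map χ = μA.ker :=
      map_ker_eq_ker_of_surjective_of_injective hδχ hχc hδχU hμδ hμχ hμc hsurj hinj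
    have hrange : μA.range.comap χU = μA.range :=
      comap_range_eq_range_of_surjective_of_injective hχc hδχU hχcU hμδ hμχ hμc hsurj hinj
    exact ⟨μA.ker_eq_bot_iff.mp (eq_bot_of_le_map hker.ge hχ),
      AddMonoidHom.range_eq_top.mp (eq_top_of_comap_le hrange.le hχU)⟩
  · intro hμA
    exact AddMonoidHom.bijective_of_surjective_of_bijective_of_bijective_of_injective
      χ c δ χ χU cU δV χU μA μA μB μA μA hμχ hμc hμδ hμχ hχc hcδ hδχ hχcU hcδV hδχU
      hμA.surjective hμA hμA hμA.injective

/-- Given two 3-periodic exact sequences of abelian groups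
`(A, B, χ, c, δ)` and `(U, V, χ_U, c_U, δ_V)`, and homomorphisms `μ_A : A → U`,
`μ_B : B → V` making the diagram commute, if `χ` and `χ_U` are nilpotent
(their `N`-fold iterates vanish for some `N`), then `μ_B` is an isomorphism
if and only if `μ_A` is an isomorphism. -/
theorem muB_iso_iff_muA_iso
    {A B U V : Type*} [AddCommGroup A] [AddCommGroup B]
    [AddCommGroup U] [AddCommGroup V]
    (χ : A →+ A) (c : A →+ B) (δ : B →+ A)
    (χU : U →+ U) (cU : U →+ V) (δV : V →+ U)
    -- exactness of the first 3-periodic sequence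
    (hker_c : ∀ a : A, c a = 0 ↔ ∃ x : A, χ x = a)
    (hker_δ : ∀ b : B, δ b = 0 ↔ ∃ a : A, c a = b)
    (hker_χ : ∀ a : A, χ a = 0 ↔ ∃ b : B, δ b = a)
    -- exactness of the second 3-periodic sequence
    (hker_cU : ∀ u : U, cU u = 0 ↔ ∃ x : U, χU x = u)
    (hker_δV : ∀ v : V, δV v = 0 ↔ ∃ u : U, cU u = v)
    (hker_χU : ∀ u : U, χU u = 0 ↔ ∃ v : V, δV v = u)
    -- the comparison homomorphisms and the commutativity of the diagram
    (μA : A →+ U) (μB : B →+ V)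
    (hcomm₁ : ∀ a : A, μA (χ a) = χU (μA a))
    (hcomm₂ : ∀ a : A, μB (c a) = cU (μA a))
    (hcomm₃ : ∀ b : B, μA (δ b) = δV (μB b))
    -- nilpotency of χ and χ_U
    (N : ℕ) (hχN : ∀ a : A, (⇑χ)^[N] a = 0) (hχUN : ∀ u : U, (⇑χU)^[N] u = 0) :
    Function.Bijective μB ↔ Function.Bijective μA :=
  muB_iso_iff_muA_iso_general hker_c hker_δ hker_χ hker_cU hker_δV hker_χU
    (AddMonoidHom.ext fun a ↦ (hcomm₁ a).symm) (AddMonoidHom.ext fun a ↦ (hcomm₂ a).symm)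
    (AddMonoidHom.ext fun b ↦ (hcomm₃ b).symm)
    (fun _ ha ↦ let ⟨x, hx⟩ := ha N; hx.symm.trans (hχN x)) fun u ↦ ⟨N, hχUN u⟩
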